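/- arXiv:2501.02489 — 5 statements merged into one kernel-verified Lean document; each statement's English description precedes it below -/
import Mathlib

section
/- Let F̂ ∈ ℝ^{n×K} satisfy F̂ᵀF̂ = n I_K, let P̂ = (1/n) F̂ F̂ᵀ, let X ∈ ℝ^{n×p}, Û = (I_n − P̂) X, y ∈ ℝⁿ, and λ > 0. Then: (i) F̂ᵀÛ = 0 (the K×p zero matrix); (ii) for all β ∈ ℝ^p and γ ∈ ℝ^K, (1/(2n))‖y − Ûβ − F̂γ‖₂² = (1/(2n))‖(I_n − P̂)y − Ûβ‖₂² + (1/(2n))‖P̂y − F̂γ‖₂²; and (iii) a pair (β̂, γ̂) is a global minimizer of (β, γ) ↦ (1/(2n))‖y − Ûβ − F̂γ‖₂² + λ‖β‖₁ if and only if γ̂ = (1/n) F̂ᵀ y and β̂ is a global minimizer of β ↦ (1/(2n))‖(I_n − P̂)y − Ûβ‖₂² + λ‖β‖₁. -/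
open Matrix BigOperators

/-- Equivalence of the joint ℓ1-penalized estimation problem and the profiled
problems: with `F̂ᵀF̂ = n I_K`, `P̂ = (1/n) F̂ F̂ᵀ`, `Û = (I − P̂) X`,
(i) `F̂ᵀÛ = 0`; (ii) the quadratic loss decomposes orthogonally; and
(iii) `(β̂, γ̂)` globally minimizes the joint objective iff `γ̂ = (1/n) F̂ᵀ y`
and `β̂` globally minimizes the profiled objective. -/
theorem penalized_estimation_profiling
    {n p K : ℕ} (hn : 0 < n)
    (Fh : Matrix (Fin n) (Fin K) ℝ) (hF : Fhᵀ * Fh = (n : ℝ) • 1)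
    (X : Matrix (Fin n) (Fin p) ℝ) (y : Fin n → ℝ)
    (lam : ℝ) (hlam : 0 < lam)
    (Ph : Matrix (Fin n) (Fin n) ℝ) (hPh : Ph = (n : ℝ)⁻¹ • (Fh * Fhᵀ))
    (Uh : Matrix (Fin n) (Fin p) ℝ) (hUh : Uh = (1 - Ph) * X) :
    (Fhᵀ * Uh = 0) ∧
    (∀ (β : Fin p → ℝ) (γ : Fin K → ℝ),
      (1 / (2 * (n : ℝ))) * ∑ i, (y i - (Uh *ᵥ β) i - (Fh *ᵥ γ) i) ^ 2
        = (1 / (2 * (n : ℝ))) * ∑ i, (((1 - Ph) *ᵥ y) i - (Uh *ᵥ β) i) ^ 2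
          + (1 / (2 * (n : ℝ))) * ∑ i, ((Ph *ᵥ y) i - (Fh *ᵥ γ) i) ^ 2) ∧
    (∀ (βhat : Fin p → ℝ) (γhat : Fin K → ℝ),
      (∀ (β : Fin p → ℝ) (γ : Fin K → ℝ),
        (1 / (2 * (n : ℝ))) * ∑ i, (y i - (Uh *ᵥ βhat) i - (Fh *ᵥ γhat) i) ^ 2
            + lam * ∑ j, |βhat j|
          ≤ (1 / (2 * (n : ℝ))) * ∑ i, (y i - (Uh *ᵥ β) i - (Fh *ᵥ γ) i) ^ 2
            + lam * ∑ j, |β j|)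
      ↔ (γhat = (n : ℝ)⁻¹ • (Fhᵀ *ᵥ y) ∧
          ∀ β : Fin p → ℝ,
            (1 / (2 * (n : ℝ))) * ∑ i, (((1 - Ph) *ᵥ y) i - (Uh *ᵥ βhat) i) ^ 2
                + lam * ∑ j, |βhat j|
              ≤ (1 / (2 * (n : ℝ))) * ∑ i, (((1 - Ph) *ᵥ y) i - (Uh *ᵥ β) i) ^ 2
                + lam * ∑ j, |β j|)) := by
  have hn0 : (n : ℝ) ≠ 0 := by positivity
  have hFP : Fhᵀ * (1 - Ph) = 0 := by
    rw [hPh, Matrix.mul_sub, Matrix.mul_smul, ← Matrix.mul_assoc, hF, Matrix.smul_mul, smul_smul,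
      inv_mul_cancel₀ hn0]
    simp
  have hFU : Fhᵀ * Uh = 0 := by
    rw [hUh, ← Matrix.mul_assoc, hFP, Matrix.zero_mul]
  have hPy : Ph *ᵥ y = Fh *ᵥ ((n : ℝ)⁻¹ • (Fhᵀ *ᵥ y)) := by
    rw [hPh, Matrix.mulVec_smul, Matrix.smul_mulVec, Matrix.mulVec_mulVec]
  have key : ∀ (β : Fin p → ℝ) (γ : Fin K → ℝ),
      (1 / (2 * (n : ℝ))) * ∑ i, (y i - (Uh *ᵥ β) i - (Fh *ᵥ γ) i) ^ 2
        = (1 / (2 * (n : ℝ))) * ∑ i, (((1 - Ph) *ᵥ y) i - (Uh *ᵥ β) i) ^ 2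
          + (1 / (2 * (n : ℝ))) * ∑ i, ((Ph *ᵥ y) i - (Fh *ᵥ γ) i) ^ 2 := by
    intro β γ
    have horth : ((1 - Ph) *ᵥ y - Uh *ᵥ β) ⬝ᵥ (Ph *ᵥ y - Fh *ᵥ γ) = 0 := by
      rw [hPy, ← Matrix.mulVec_sub, Matrix.dotProduct_mulVec, ← Matrix.mulVec_transpose,
        Matrix.mulVec_sub, Matrix.mulVec_mulVec, Matrix.mulVec_mulVec, hFP, hFU]
      simp
    have hs : ∑ i, (((1 - Ph) *ᵥ y) i - (Uh *ᵥ β) i) * ((Ph *ᵥ y) i - (Fh *ᵥ γ) i) = 0 := horth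
    rw [← mul_add]
    congr 1
    have h2 : ∑ i, (y i - (Uh *ᵥ β) i - (Fh *ᵥ γ) i) ^ 2
        = ∑ i, ((((1 - Ph) *ᵥ y) i - (Uh *ᵥ β) i) ^ 2 + ((Ph *ᵥ y) i - (Fh *ᵥ γ) i) ^ 2
          + 2 * ((((1 - Ph) *ᵥ y) i - (Uh *ᵥ β) i) * ((Ph *ᵥ y) i - (Fh *ᵥ γ) i))) := by
      refine Finset.sum_congr rfl fun i _ => ?_
      have : ((1 - Ph) *ᵥ y) i = y i - (Ph *ᵥ y) i := by
        rw [Matrix.sub_mulVec, Matrix.one_mulVec, Pi.sub_apply]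
      rw [this]
      ring
    rw [h2, Finset.sum_add_distrib, Finset.sum_add_distrib, ← Finset.mul_sum, hs]
    ring
  have hzero : (1 / (2 * (n : ℝ))) *
      ∑ i, ((Ph *ᵥ y) i - (Fh *ᵥ ((n : ℝ)⁻¹ • (Fhᵀ *ᵥ y))) i) ^ 2 = 0 := by
    rw [← hPy]; simp
  have hc : 0 < 1 / (2 * (n : ℝ)) := by positivity
  have hnn : ∀ γ : Fin K → ℝ, 0 ≤ ∑ i, ((Ph *ᵥ y) i - (Fh *ᵥ γ) i) ^ 2 :=
    fun γ => Finset.sum_nonneg fun i _ => sq_nonneg _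
  refine ⟨hFU, key, fun βhat γhat => ⟨fun h => ⟨?_, fun β => ?_⟩, ?_⟩⟩
  · have h1 := h βhat ((n : ℝ)⁻¹ • (Fhᵀ *ᵥ y))
    rw [key, key, hzero] at h1
    have h2 : ∑ i, ((Ph *ᵥ y) i - (Fh *ᵥ γhat) i) ^ 2 = 0 := by
      refine le_antisymm ?_ (hnn _)
      by_contra hcon
      have := mul_pos hc (not_le.mp hcon)
      linarith
    have h3 : Ph *ᵥ y = Fh *ᵥ γhat := by
      funext i
      have := (Finset.sum_eq_zero_iff_of_nonneg (fun i _ => sq_nonneg _)).mp h2 i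
        (Finset.mem_univ i)
      exact sub_eq_zero.mp (pow_eq_zero_iff (two_ne_zero) |>.mp this)
    rw [hPy] at h3
    have h4 := congrArg (fun v => (n : ℝ)⁻¹ • (Fhᵀ *ᵥ v)) h3
    simp only [Matrix.mulVec_mulVec, hF, Matrix.smul_mulVec, Matrix.one_mulVec, smul_smul,
      inv_mul_cancel₀ hn0, mul_inv_cancel₀ hn0, mul_one, one_smul] at h4
    exact h4.symm
  · have h1 := h β ((n : ℝ)⁻¹ • (Fhᵀ *ᵥ y))
    rw [key, key, hzero] at h1
    have := mul_nonneg hc.le (hnn γhat)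
    linarith
  · rintro ⟨rfl, h⟩ β γ
    rw [key, key, hzero]
    have := mul_nonneg hc.le (hnn γ)
    have := h β
    linarith
end

section
/- Let U ∈ ℝ^{n×p}, β* ∈ ℝ^p, w ∈ ℝⁿ, y = Uβ* + w, and λ > 0. Let S ⊆ {1, …, p} contain the support of β*, with |S| = s, and let β̂ ∈ ℝ^p and θ = β̂ − β*. Suppose there exists κ ∈ ℝ^p with ‖κ‖_∞ ≤ 1, ⟨κ, β̂⟩ = ‖β̂‖₁, and (1/n)Uᵀ(Uβ̂ − y) + λκ = 0 (the KKT condition), and suppose λ ≥ 2‖(1/n)Uᵀw‖_∞. Then: (i) (1/n)‖Uθ‖₂² ≤ (3/2) λ √s ‖θ‖₂, and (ii) the cone condition ‖θ_{S^c}‖₁ ≤ 3‖θ_S‖₁ holds. -/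
open Matrix BigOperators Finset

/-- Deterministic upper bound and cone condition in the proof of Theorem 4:
under the KKT condition and `λ ≥ 2‖(1/n)Uᵀw‖_∞`, one has
`(1/n)‖Uθ‖₂² ≤ (3/2) λ √s ‖θ‖₂` and `‖θ_{Sᶜ}‖₁ ≤ 3‖θ_S‖₁`. -/
theorem lasso_upper_bound_and_cone
    {n p : ℕ} (U : Matrix (Fin n) (Fin p) ℝ)
    (βstar : Fin p → ℝ) (w : Fin n → ℝ) (y : Fin n → ℝ)
    (hy : y = U *ᵥ βstar + w)
    (lam : ℝ) (hlam : 0 < lam)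
    (S : Finset (Fin p)) (hsupp : ∀ j ∉ S, βstar j = 0)
    (s : ℕ) (hs : s = S.card)
    (βhat : Fin p → ℝ) (θ : Fin p → ℝ) (hθ : θ = βhat - βstar)
    (κ : Fin p → ℝ) (hκ_sub : ∀ j, |κ j| ≤ 1)
    (hκ_dot : κ ⬝ᵥ βhat = ∑ j, |βhat j|)
    (hKKT : (n : ℝ)⁻¹ • (Uᵀ *ᵥ (U *ᵥ βhat - y)) + lam • κ = 0)
    (hlam_ge : 2 * (⨆ j, |(n : ℝ)⁻¹ * (Uᵀ *ᵥ w) j|) ≤ lam) :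
    ((n : ℝ)⁻¹ * ∑ i, ((U *ᵥ θ) i) ^ 2
      ≤ (3 / 2) * lam * Real.sqrt s * Real.sqrt (∑ j, (θ j) ^ 2)) ∧
    (∑ j ∈ Sᶜ, |θ j|) ≤ 3 * ∑ j ∈ S, |θ j| := by
  have hg : ∀ j, |(n : ℝ)⁻¹ * (Uᵀ *ᵥ w) j| ≤ lam / 2 := by
    intro j
    have h := le_ciSup (f := fun j => |(n : ℝ)⁻¹ * (Uᵀ *ᵥ w) j|) (Set.finite_range _).bddAbove j
    linarith
  have hk : ∀ j, (n : ℝ)⁻¹ * (Uᵀ *ᵥ (U *ᵥ θ)) j = (n : ℝ)⁻¹ * (Uᵀ *ᵥ w) j - lam * κ j := by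
    intro j
    have h := congrFun hKKT j
    have e : U *ᵥ βhat - y = U *ᵥ θ - w := by
      rw [hy, hθ, Matrix.mulVec_sub]; abel
    rw [e, Matrix.mulVec_sub] at h
    simp only [Pi.add_apply, Pi.smul_apply, Pi.sub_apply, smul_eq_mul, Pi.zero_apply] at h
    linarith
  have hD : (n : ℝ)⁻¹ * ∑ i, ((U *ᵥ θ) i) ^ 2
      = ∑ j, ((n : ℝ)⁻¹ * (Uᵀ *ᵥ w) j - lam * κ j) * θ j := by
    have e : ∑ i, ((U *ᵥ θ) i) ^ 2 = (Uᵀ *ᵥ (U *ᵥ θ)) ⬝ᵥ θ := by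
      rw [Matrix.mulVec_transpose, ← Matrix.dotProduct_mulVec]
      simp [dotProduct, sq]
    rw [e, dotProduct, Finset.mul_sum]
    refine Finset.sum_congr rfl fun j _ => ?_
    rw [← hk j, mul_assoc]
  have hdot : ∑ j, lam * (κ j * βhat j - |βhat j|) = 0 := by
    rw [← Finset.mul_sum, Finset.sum_sub_distrib, ← hκ_dot]
    simp [dotProduct]
  have hDle : (n : ℝ)⁻¹ * ∑ i, ((U *ᵥ θ) i) ^ 2
      ≤ ∑ j, (if j ∈ S then (3 / 2 * lam) * |θ j| else (-(lam / 2)) * |θ j|) := by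
    rw [hD, ← add_zero (∑ j, ((n : ℝ)⁻¹ * (Uᵀ *ᵥ w) j - lam * κ j) * θ j), ← hdot,
      ← Finset.sum_add_distrib]
    refine Finset.sum_le_sum fun j _ => ?_
    have h1 : (n : ℝ)⁻¹ * (Uᵀ *ᵥ w) j * θ j ≤ lam / 2 * |θ j| := by
      refine (le_abs_self _).trans ?_
      rw [abs_mul]
      exact mul_le_mul_of_nonneg_right (hg j) (abs_nonneg _)
    have hθj : θ j = βhat j - βstar j := by rw [hθ]; rfl
    have h2 : κ j * βstar j ≤ |βstar j| := by
      refine (le_abs_self _).trans ?_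
      rw [abs_mul]
      exact mul_le_of_le_one_left (abs_nonneg _) (hκ_sub j)
    have e : ((n : ℝ)⁻¹ * (Uᵀ *ᵥ w) j - lam * κ j) * θ j + lam * (κ j * βhat j - |βhat j|)
        = (n : ℝ)⁻¹ * (Uᵀ *ᵥ w) j * θ j + lam * (κ j * βstar j - |βhat j|) := by
      rw [hθj]; ring
    rw [e]
    split_ifs with hj
    · have h3 : |βstar j| - |βhat j| ≤ |θ j| := by
        rw [hθj, abs_sub_comm]; exact abs_sub_abs_le_abs_sub _ _
      have := mul_le_mul_of_nonneg_left
        (show κ j * βstar j - |βhat j| ≤ |θ j| by linarith) hlam.le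
      linarith
    · have h0 := hsupp j hj
      have h3 : |βhat j| = |θ j| := by rw [hθj, h0, sub_zero]
      rw [h0, h3]
      linarith
  have hsplit : ∑ j, (if j ∈ S then (3 / 2 * lam) * |θ j| else (-(lam / 2)) * |θ j|)
      = 3 / 2 * lam * ∑ j ∈ S, |θ j| - lam / 2 * ∑ j ∈ Sᶜ, |θ j| := by
    rw [← Finset.sum_add_sum_compl S,
      Finset.sum_congr rfl (fun j hj => if_pos hj),
      Finset.sum_congr (s₁ := Sᶜ) rfl (fun j hj => if_neg (Finset.mem_compl.mp hj)),
      ← Finset.mul_sum, ← Finset.mul_sum]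
    ring
  rw [hsplit] at hDle
  have hD0 : 0 ≤ (n : ℝ)⁻¹ * ∑ i, ((U *ᵥ θ) i) ^ 2 := by positivity
  have hB : 0 ≤ lam / 2 * ∑ j ∈ Sᶜ, |θ j| := by positivity
  have hA : ∑ j ∈ S, |θ j| ≤ Real.sqrt s * Real.sqrt (∑ j, (θ j) ^ 2) := by
    rw [← Real.sqrt_mul (Nat.cast_nonneg s)]
    apply Real.le_sqrt_of_sq_le
    have h := sq_sum_le_card_mul_sum_sq (s := S) (f := fun j => |θ j|)
    simp only [sq_abs] at h
    rw [hs]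
    refine h.trans (mul_le_mul_of_nonneg_left ?_ (Nat.cast_nonneg _))
    exact Finset.sum_le_sum_of_subset_of_nonneg (Finset.subset_univ _)
      (fun _ _ _ => sq_nonneg _)
  constructor
  · have := mul_le_mul_of_nonneg_left hA (show 0 ≤ 3 / 2 * lam by positivity)
    rw [mul_assoc (3 / 2 * lam)]
    linarith
  · have h : lam / 2 * ∑ j ∈ Sᶜ, |θ j| ≤ lam / 2 * (3 * ∑ j ∈ S, |θ j|) := by linarith
    exact le_of_mul_le_mul_left h (by positivity)
end

section
/- Let U ∈ ℝ^{n×p}, β* ∈ ℝ^p, w ∈ ℝⁿ, y = Uβ* + w, and λ > 0. Let S ⊆ {1, …, p} contain the support of β*, with |S| = s ≥ 1, let β̂ ∈ ℝ^p, and set θ = β̂ − β*. Suppose: (a) there exists κ ∈ ℝ^p with ‖κ‖_∞ ≤ 1, ⟨κ, β̂⟩ = ‖β̂‖₁, and (1/n)Uᵀ(Uβ̂ − y) + λκ = 0; (b) λ ≥ 2‖(1/n)Uᵀw‖_∞; and (c) there is a constant C > 0 with (1/n)‖Uθ‖₂² ≥ C‖θ‖₂². Then ‖θ‖₂ ≤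 (3λ√s)/(2C) and ‖θ‖₁ ≤ 6λs/C. -/
open Matrix BigOperators Finset

/-- Deterministic finite-sample core of Theorem 4: under the KKT condition,
`λ ≥ 2‖(1/n)Uᵀw‖_∞`, and the restricted-eigenvalue lower bound
`(1/n)‖Uθ‖₂² ≥ C‖θ‖₂²`, the Lasso error satisfies
`‖θ‖₂ ≤ 3λ√s/(2C)` and `‖θ‖₁ ≤ 6λs/C`. -/
theorem lasso_error_bounds
    {n p : ℕ} (U : Matrix (Fin n) (Fin p) ℝ)
    (βstar : Fin p → ℝ) (w : Fin n → ℝ) (y : Fin n → ℝ)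
    (hy : y = U *ᵥ βstar + w)
    (lam : ℝ) (hlam : 0 < lam)
    (S : Finset (Fin p)) (hsupp : ∀ j ∉ S, βstar j = 0)
    (s : ℕ) (hs : s = S.card) (hs_pos : 1 ≤ s)
    (βhat : Fin p → ℝ) (θ : Fin p → ℝ) (hθ : θ = βhat - βstar)
    (κ : Fin p → ℝ) (hκ_sub : ∀ j, |κ j| ≤ 1)
    (hκ_dot : κ ⬝ᵥ βhat = ∑ j, |βhat j|)
    (hKKT : (n : ℝ)⁻¹ • (Uᵀ *ᵥ (U *ᵥ βhat - y)) + lam • κ = 0)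
    (hlam_ge : 2 * (⨆ j, |(n : ℝ)⁻¹ * (Uᵀ *ᵥ w) j|) ≤ lam)
    (C : ℝ) (hC : 0 < C)
    (hRE : (n : ℝ)⁻¹ * ∑ i, ((U *ᵥ θ) i) ^ 2 ≥ C * ∑ j, (θ j) ^ 2) :
    Real.sqrt (∑ j, (θ j) ^ 2) ≤ 3 * lam * Real.sqrt s / (2 * C) ∧
    (∑ j, |θ j|) ≤ 6 * lam * s / C := by
  have hg : ∀ j, |(n : ℝ)⁻¹ * (Uᵀ *ᵥ w) j| ≤ lam / 2 := by
    intro j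
    have := le_ciSup (f := fun j => |(n : ℝ)⁻¹ * (Uᵀ *ᵥ w) j|) (Set.finite_range _).bddAbove j
    linarith
  have hres : U *ᵥ βhat - y = U *ᵥ θ - w := by
    rw [hy, hθ, Matrix.mulVec_sub]; abel
  have hk : ∀ j, (n : ℝ)⁻¹ * (Uᵀ *ᵥ (U *ᵥ θ)) j = (n : ℝ)⁻¹ * (Uᵀ *ᵥ w) j - lam * κ j := by
    intro j
    have h := congrFun hKKT j
    rw [hres, Matrix.mulVec_sub] at h
    simp only [Pi.add_apply, Pi.smul_apply, Pi.sub_apply, smul_eq_mul, Pi.zero_apply] at h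
    linarith
  have hle : ∀ j, κ j * βhat j ≤ |βhat j| := by
    intro j
    calc κ j * βhat j ≤ |κ j * βhat j| := le_abs_self _
      _ = |κ j| * |βhat j| := abs_mul _ _
      _ ≤ 1 * |βhat j| := by gcongr; exact hκ_sub j
      _ = _ := one_mul _
  have heq : ∀ j, κ j * βhat j = |βhat j| := by
    have := (Finset.sum_eq_sum_iff_of_le (s := Finset.univ) (fun j _ => hle j)).1 hκ_dot
    exact fun j => this j (Finset.mem_univ j)
  have hquad : (n : ℝ)⁻¹ * ∑ i, ((U *ᵥ θ) i) ^ 2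
      = ∑ j, ((n : ℝ)⁻¹ * (Uᵀ *ᵥ w) j - lam * κ j) * θ j := by
    have h1 : ∑ i, ((U *ᵥ θ) i) ^ 2 = ∑ j, (Uᵀ *ᵥ (U *ᵥ θ)) j * θ j := by
      have : (U *ᵥ θ) ⬝ᵥ (U *ᵥ θ) = (Uᵀ *ᵥ (U *ᵥ θ)) ⬝ᵥ θ := by
        rw [Matrix.dotProduct_mulVec, Matrix.mulVec_transpose]
      simpa [dotProduct, sq] using this
    rw [h1, Finset.mul_sum]
    refine Finset.sum_congr rfl fun j _ => ?_
    rw [← hk j]; ring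
  have hgt : ∀ j, (n : ℝ)⁻¹ * (Uᵀ *ᵥ w) j * θ j ≤ lam / 2 * |θ j| := by
    intro j
    calc _ ≤ |(n : ℝ)⁻¹ * (Uᵀ *ᵥ w) j * θ j| := le_abs_self _
      _ = |(n : ℝ)⁻¹ * (Uᵀ *ᵥ w) j| * |θ j| := abs_mul _ _
      _ ≤ _ := by gcongr; exact hg j
  have hbd : ∑ j, ((n : ℝ)⁻¹ * (Uᵀ *ᵥ w) j - lam * κ j) * θ j
      ≤ 3 / 2 * lam * ∑ j ∈ S, |θ j| - lam / 2 * ∑ j ∈ Sᶜ, |θ j| := by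
    rw [← Finset.sum_add_sum_compl S, sub_eq_add_neg, ← neg_mul, Finset.mul_sum, Finset.mul_sum]
    refine add_le_add (Finset.sum_le_sum fun j _ => ?_) (Finset.sum_le_sum fun j hj => ?_)
    · have h2 : -(κ j * θ j) ≤ |θ j| := by
        calc -(κ j * θ j) ≤ |κ j * θ j| := neg_le_abs _
          _ = |κ j| * |θ j| := abs_mul _ _
          _ ≤ 1 * |θ j| := by gcongr; exact hκ_sub j
          _ = _ := one_mul _
      have := mul_le_mul_of_nonneg_left h2 hlam.le
      nlinarith [hgt j]
    · have h3 : θ j = βhat j := by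
        rw [hθ, Pi.sub_apply, hsupp j (Finset.mem_compl.1 hj), sub_zero]
      have h4 : κ j * θ j = |θ j| := by rw [h3]; exact heq j
      have h5 : lam * κ j * θ j = lam * |θ j| := by rw [mul_assoc, h4]
      nlinarith [hgt j]
  have htot : ∑ j, |θ j| = ∑ j ∈ S, |θ j| + ∑ j ∈ Sᶜ, |θ j| :=
    (Finset.sum_add_sum_compl S _).symm
  have hCS : (∑ j ∈ S, |θ j|) ^ 2 ≤ s * ∑ j, (θ j) ^ 2 := by
    have h1 := sq_sum_le_card_mul_sum_sq (s := S) (f := fun j => |θ j|)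
    simp only [sq_abs] at h1
    rw [hs]
    refine h1.trans ?_
    gcongr
    exact Finset.subset_univ S
  have hA0 : 0 ≤ ∑ j ∈ S, |θ j| := Finset.sum_nonneg fun _ _ => abs_nonneg _
  have hB0 : 0 ≤ ∑ j ∈ Sᶜ, |θ j| := Finset.sum_nonneg fun _ _ => abs_nonneg _
  have hT0 : 0 ≤ ∑ j, (θ j) ^ 2 := Finset.sum_nonneg fun _ _ => sq_nonneg _
  have hmain := hRE.le.trans (hquad.le.trans hbd)
  rw [htot]
  generalize (∑ j ∈ S, |θ j|) = A at *
  generalize (∑ j ∈ Sᶜ, |θ j|) = B at *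
  generalize (∑ j, (θ j) ^ 2) = T at *
  have hr0 := Real.sqrt_nonneg (s : ℝ)
  have ht0 := Real.sqrt_nonneg T
  have hr2 := Real.sq_sqrt (Nat.cast_nonneg (α := ℝ) s)
  have ht2 := Real.sq_sqrt hT0
  have hArt : A ≤ Real.sqrt s * Real.sqrt T := by
    refine (abs_le_of_sq_le_sq' ?_ (by positivity)).2
    rw [mul_pow, hr2, ht2]; exact hCS
  generalize Real.sqrt (s : ℝ) = r at *
  generalize Real.sqrt T = t at *
  have hl2 : t * (2 * C) ≤ 3 * lam * r := by
    rcases ht0.eq_or_lt with h | h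
    · rw [← h]; simp only [zero_mul]; positivity
    · have h1 : lam * A ≤ lam * (r * t) := mul_le_mul_of_nonneg_left hArt hlam.le
      have h2 : 0 ≤ lam * B := mul_nonneg hlam.le hB0
      have h3 : C * t ^ 2 ≤ 3 / 2 * (lam * (r * t)) := by rw [ht2]; linarith
      refine le_of_mul_le_mul_right ?_ h
      linarith
  have hB : B ≤ 3 * A := by
    have h1 : 0 ≤ C * T := by positivity
    refine le_of_mul_le_mul_left ?_ hlam
    linarith
  refine ⟨(le_div_iff₀ (by positivity)).2 hl2, (le_div_iff₀ hC).2 ?_⟩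
  have h1 := mul_le_mul_of_nonneg_left hl2 hr0
  have h2 : A * C ≤ r * t * C := mul_le_mul_of_nonneg_right hArt hC.le
  have h3 : B * C ≤ 3 * A * C := mul_le_mul_of_nonneg_right hB hC.le
  rw [← hr2]
  linarith
end

section
/- Let Û ∈ ℝ^{n×p}, β*, β̂ ∈ ℝ^p, w ∈ ℝⁿ, y = Ûβ* + w, Θ̂ ∈ ℝ^{p×p}, β̃ = β̂ + (1/n) Θ̂ Ûᵀ(y − Ûβ̂), and Σ̂ = (1/n) ÛᵀÛ. Then ‖β̃ − β* − (1/n) Θ̂ Ûᵀ w‖_∞ ≤ ‖Θ̂ Σ̂ − I_p‖_max · ‖β̂ − β*‖₁. In particular, if ‖Θ̂ Σ̂ − I_p‖_max ≤ δ, then ‖√n(β̃ − β*) − n^{-1/2} Θ̂ Ûᵀ w‖_∞ ≤ √n · δ · ‖β̂ − β*‖₁. -/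
open Matrix BigOperators

/-- Control of the remainder in the debiased decomposition:
`‖β̃ − β* − (1/n)Θ̂Ûᵀw‖_∞ ≤ ‖Θ̂Σ̂ − I‖_max ‖β̂ − β*‖₁`, and under the CLIME
feasibility constraint `‖Θ̂Σ̂ − I‖_max ≤ δ`,
`‖√n(β̃ − β*) − n^{-1/2}Θ̂Ûᵀw‖_∞ ≤ √n δ ‖β̂ − β*‖₁`. -/
theorem debiased_remainder_bound
    {n p : ℕ} (Uh : Matrix (Fin n) (Fin p) ℝ)
    (βstar βhat : Fin p → ℝ) (w : Fin n → ℝ) (y : Fin n → ℝ)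
    (hy : y = Uh *ᵥ βstar + w)
    (Θh : Matrix (Fin p) (Fin p) ℝ)
    (βtil : Fin p → ℝ)
    (hβtil : βtil = βhat + (n : ℝ)⁻¹ • (Θh *ᵥ (Uhᵀ *ᵥ (y - Uh *ᵥ βhat))))
    (Sigh : Matrix (Fin p) (Fin p) ℝ) (hSig : Sigh = (n : ℝ)⁻¹ • (Uhᵀ * Uh)) :
    ((⨆ j, |(βtil - βstar - (n : ℝ)⁻¹ • (Θh *ᵥ (Uhᵀ *ᵥ w))) j|)
      ≤ (⨆ j, ⨆ k, |(Θh * Sigh - 1) j k|) * ∑ j, |βhat j - βstar j|) ∧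
    ∀ δ : ℝ, (⨆ j, ⨆ k, |(Θh * Sigh - 1) j k|) ≤ δ →
      (⨆ j, |Real.sqrt n * (βtil j - βstar j)
              - (Real.sqrt n)⁻¹ * (Θh *ᵥ (Uhᵀ *ᵥ w)) j|)
        ≤ Real.sqrt n * δ * ∑ j, |βhat j - βstar j| := by
  have key : βtil - βstar - (n : ℝ)⁻¹ • (Θh *ᵥ (Uhᵀ *ᵥ w))
      = -((Θh * Sigh - 1) *ᵥ (βhat - βstar)) := by
    subst hy hβtil hSig
    simp only [Matrix.sub_mulVec, Matrix.mulVec_sub, Matrix.mulVec_add, Matrix.one_mulVec,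
      Matrix.mul_smul, Matrix.smul_mulVec, Matrix.mulVec_mulVec, Matrix.mul_assoc]
    module
  have hM0 : 0 ≤ ⨆ j, ⨆ k, |(Θh * Sigh - 1) j k| :=
    Real.iSup_nonneg fun j => Real.iSup_nonneg fun k => abs_nonneg _
  have hS0 : 0 ≤ ∑ j, |βhat j - βstar j| := Finset.sum_nonneg fun j _ => abs_nonneg _
  have hent : ∀ j k, |(Θh * Sigh - 1) j k| ≤ ⨆ j, ⨆ k, |(Θh * Sigh - 1) j k| := fun j k =>
    (le_ciSup (f := fun k => |(Θh * Sigh - 1) j k|) (Set.finite_range _).bddAbove k).trans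
      (le_ciSup (f := fun j => ⨆ k, |(Θh * Sigh - 1) j k|) (Set.finite_range _).bddAbove j)
  have hpt : ∀ j, |(βtil - βstar - (n : ℝ)⁻¹ • (Θh *ᵥ (Uhᵀ *ᵥ w))) j|
      ≤ (⨆ j, ⨆ k, |(Θh * Sigh - 1) j k|) * ∑ j, |βhat j - βstar j| := by
    intro j
    rw [key, Pi.neg_apply, abs_neg, Finset.mul_sum, Matrix.mulVec, dotProduct]
    refine (Finset.abs_sum_le_sum_abs _ _).trans (Finset.sum_le_sum fun k _ => ?_)
    rw [abs_mul, Pi.sub_apply]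
    exact mul_le_mul_of_nonneg_right (hent j k) (abs_nonneg _)
  refine ⟨Real.iSup_le hpt (mul_nonneg hM0 hS0), fun δ hδ => ?_⟩
  have hs := Real.sqrt_nonneg (n : ℝ)
  refine Real.iSup_le (fun j => ?_) (mul_nonneg (mul_nonneg hs (hM0.trans hδ)) hS0)
  have hinv : (Real.sqrt n)⁻¹ = Real.sqrt n * (n : ℝ)⁻¹ := by
    rw [← div_eq_mul_inv, Real.sqrt_div_self]
  have e : Real.sqrt n * (βtil j - βstar j) - (Real.sqrt n)⁻¹ * (Θh *ᵥ (Uhᵀ *ᵥ w)) j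
      = Real.sqrt n * (βtil - βstar - (n : ℝ)⁻¹ • (Θh *ᵥ (Uhᵀ *ᵥ w))) j := by
    rw [hinv]
    simp only [Pi.sub_apply, Pi.smul_apply, smul_eq_mul]
    ring
  rw [e, abs_mul, abs_of_nonneg hs, mul_assoc]
  exact mul_le_mul_of_nonneg_left
    ((hpt j).trans (mul_le_mul_of_nonneg_right hδ hS0)) hs
end

section
/- Let A, Θ*, Σ, Σ̂ ∈ ℝ^{p×p} with Σ Θ* = I_p. Then A − Θ* = (A Σ − I_p) Θ*, and consequently ‖A − Θ*‖_max ≤ ‖Θ*‖₁ · ( ‖A Σ̂ − I_p‖_max + ‖A‖_∞ · ‖Σ̂ − Σ‖_max ). In particular, if A satisfies the feasibility constraint ‖A Σ̂ − I_p‖_max ≤ δ, then ‖A − Θ*‖_max ≤ ‖Θ*‖₁ (δ + ‖A‖_∞ ‖Σ̂ − Σ‖_max). -/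
open Matrix BigOperators

lemma clime_le_max {p : ℕ} (M : Matrix (Fin p) (Fin p) ℝ) (j k : Fin p) :
    |M j k| ≤ ⨆ j, ⨆ k, |M j k| :=
  (le_ciSup (f := fun k => |M j k|) (Set.finite_range _).bddAbove k).trans
    (le_ciSup (f := fun j => ⨆ k, |M j k|) (Set.finite_range _).bddAbove j)

lemma clime_max_nonneg {p : ℕ} (M : Matrix (Fin p) (Fin p) ℝ) :
    0 ≤ ⨆ j, ⨆ k, |M j k| :=
  Real.iSup_nonneg fun _ => Real.iSup_nonneg fun _ => abs_nonneg _

/-- Deterministic matrix inequality behind the CLIME error bound: if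
`Σ Θ* = I`, then `A − Θ* = (AΣ − I)Θ*`, hence
`‖A − Θ*‖_max ≤ ‖Θ*‖₁ (‖AΣ̂ − I‖_max + ‖A‖_∞ ‖Σ̂ − Σ‖_max)`; in particular
this holds with `‖AΣ̂ − I‖_max` replaced by any feasibility level `δ`. -/
theorem clime_error_bound
    {p : ℕ} (A Θstar Sig Sighat : Matrix (Fin p) (Fin p) ℝ)
    (hΘ : Sig * Θstar = 1) :
    A - Θstar = (A * Sig - 1) * Θstar ∧
    ((⨆ j, ⨆ k, |(A - Θstar) j k|)
      ≤ (⨆ k, ∑ j, |Θstar j k|) *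
          ((⨆ j, ⨆ k, |(A * Sighat - 1) j k|)
            + (⨆ j, ∑ k, |A j k|) * (⨆ j, ⨆ k, |(Sighat - Sig) j k|))) ∧
    ∀ δ : ℝ, (⨆ j, ⨆ k, |(A * Sighat - 1) j k|) ≤ δ →
      (⨆ j, ⨆ k, |(A - Θstar) j k|)
        ≤ (⨆ k, ∑ j, |Θstar j k|) *
            (δ + (⨆ j, ∑ k, |A j k|) * (⨆ j, ⨆ k, |(Sighat - Sig) j k|)) := by
  have h1 : A - Θstar = (A * Sig - 1) * Θstar := by
    rw [Matrix.sub_mul, Matrix.mul_assoc, hΘ, Matrix.mul_one, Matrix.one_mul]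
  have hT : 0 ≤ ⨆ k, ∑ j, |Θstar j k| :=
    Real.iSup_nonneg fun _ => Finset.sum_nonneg fun _ _ => abs_nonneg _
  have hA : 0 ≤ ⨆ j, ∑ k, |A j k| :=
    Real.iSup_nonneg fun _ => Finset.sum_nonneg fun _ _ => abs_nonneg _
  have hD := clime_max_nonneg (Sighat - Sig)
  have hE := clime_max_nonneg (A * Sighat - 1)
  have key : ∀ j l, |(A * Sig - 1) j l| ≤ (⨆ j, ⨆ k, |(A * Sighat - 1) j k|)
      + (⨆ j, ∑ k, |A j k|) * (⨆ j, ⨆ k, |(Sighat - Sig) j k|) := by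
    intro j l
    have e : A * Sig - 1 = (A * Sighat - 1) - A * (Sighat - Sig) := by
      rw [Matrix.mul_sub]; abel
    rw [e, Matrix.sub_apply]
    refine (abs_sub _ _).trans (add_le_add (clime_le_max _ j l) ?_)
    rw [Matrix.mul_apply]
    calc |∑ m, A j m * (Sighat - Sig) m l|
        ≤ ∑ m, |A j m * (Sighat - Sig) m l| := Finset.abs_sum_le_sum_abs _ _
      _ ≤ ∑ m, |A j m| * (⨆ j, ⨆ k, |(Sighat - Sig) j k|) := by
          refine Finset.sum_le_sum fun m _ => ?_
          rw [abs_mul]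
          exact mul_le_mul_of_nonneg_left (clime_le_max _ m l) (abs_nonneg _)
      _ = (∑ m, |A j m|) * (⨆ j, ⨆ k, |(Sighat - Sig) j k|) := by rw [Finset.sum_mul]
      _ ≤ _ := mul_le_mul_of_nonneg_right
          (le_ciSup (f := fun j => ∑ k, |A j k|) (Set.finite_range _).bddAbove j) hD
  have hB := add_nonneg hE (mul_nonneg hA hD)
  have h2 : (⨆ j, ⨆ k, |(A - Θstar) j k|)
      ≤ (⨆ k, ∑ j, |Θstar j k|) *
          ((⨆ j, ⨆ k, |(A * Sighat - 1) j k|)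
            + (⨆ j, ∑ k, |A j k|) * (⨆ j, ⨆ k, |(Sighat - Sig) j k|)) := by
    refine Real.iSup_le (fun j => Real.iSup_le (fun k => ?_) (mul_nonneg hT hB))
      (mul_nonneg hT hB)
    rw [h1, Matrix.mul_apply]
    refine (Finset.abs_sum_le_sum_abs _ _).trans ?_
    refine le_trans ?_ (mul_le_mul_of_nonneg_right
      (le_ciSup (f := fun k => ∑ j, |Θstar j k|) (Set.finite_range _).bddAbove k) hB)
    rw [Finset.sum_mul]
    refine Finset.sum_le_sum fun m _ => ?_
    rw [abs_mul, mul_comm]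
    exact mul_le_mul_of_nonneg_left (key j m) (abs_nonneg _)
  refine ⟨h1, h2, fun δ hδ => h2.trans (mul_le_mul_of_nonneg_left ?_ hT)⟩
  exact add_le_add hδ le_rfl
end
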